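/- Let A be a unital C*-algebra, B ⊆ A a commutative unital C*-subalgebra, E : A → B a faithful conditional expectation onto B, and T ∈ A an element satisfying the B-valued circular moment relations with respect to E. Then for every n ≥ 1, every ε(1),…,ε(n) ∈ {1,*} and all b₁,…,b_n ∈ B: ‖T^{(ε(1))} b₁ T^{(ε(2))} b₂ ⋯ T^{(ε(n))} b_n‖ ≤ (∏_{j=1}^n ‖b_j‖) · ‖T^{(ε(1))} T^{(ε(2))} ⋯ T^{(ε(n))}‖. -/

import Mathlib

open Filter
open scoped ComplexOrder

section Preamble

variable {A : Type*} [CStarAlgebra A] [PartialOrder A] [StarOrderedRing A]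

/-- The absolute value `(a* a)^{1/2}` of an element of a C*-algebra. -/
noncomputable def cabs (a : A) : A := CFC.sqrt (star a * a)

/-- `E : A → A` is a conditional expectation onto the C*-subalgebra `B`:
it takes values in `B`, fixes `B`, is a `B`-bimodule map, and is positive and contractive. -/
structure IsCondExp (B : StarSubalgebra ℂ A) (E : A →ₗ[ℂ] A) : Prop where
  mem_range : ∀ x : A, E x ∈ B
  fixes : ∀ b ∈ B, E b = b
  bimodule : ∀ b₁ ∈ B, ∀ b₂ ∈ B, ∀ x : A, E (b₁ * x * b₂) = b₁ * E x * b₂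
  positive : ∀ x : A, 0 ≤ x → 0 ≤ E x
  contractive : ∀ x : A, ‖E x‖ ≤ ‖x‖

/-- `word T [(ε₁,b₁),…,(εₙ,bₙ)] = T^{ε₁} * b₁ * ⋯ * T^{εₙ} * bₙ`, where `true` stands for
the exponent `1` and `false` for the exponent `*`. -/
def word (T : A) (l : List (Bool × A)) : A :=
  (l.map (fun p => (cond p.1 T (star T)) * p.2)).prod

/-- A word is balanced when there are as many `*`'s as `1`'s among the exponents. -/
abbrev IsBalanced (l : List (Bool × A)) : Prop :=
  2 * l.countP (fun p => p.1) = l.length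

/-- `T` satisfies the `B`-valued circular moment relations with respect to `E`:
the expectation of any unbalanced word vanishes, and the expectation of a nonempty balanced word
`T^{ε₁} b₁ ⋯ T^{εₙ} bₙ` satisfies the moment-cumulant recursion of a `B`-valued circular
element, where the sum runs over those positions `j ∈ {2,…,n}` (here `j = i + 2` for the
`i`-th entry of the tail, `0`-based) for which `ε_j ≠ ε₁` and the prefix `ε₁,…,ε_j` is
balanced. -/
structure IsBCircular (B : StarSubalgebra ℂ A) (E : A →ₗ[ℂ] A) (T : A) : Prop where
  expect_unbalanced : ∀ l : List (Bool × A), (∀ p ∈ l, p.2 ∈ B) →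
    ¬ IsBalanced l → E (word T l) = 0
  expect_cons_one : ∀ b ∈ B, ∀ tl : List (Bool × A), (∀ p ∈ tl, p.2 ∈ B) →
    IsBalanced ((true, b) :: tl) →
    E (word T ((true, b) :: tl)) =
      ∑ i ∈ Finset.range tl.length,
        if (tl.getD i (true, 1)).1 = false ∧ IsBalanced ((true, b) :: tl.take (i + 1)) then
          E (T * (b * E (word T (tl.take i))) * star T) * (tl.getD i (true, 1)).2 *
            E (word T (tl.drop (i + 1)))
        else 0
  expect_cons_star : ∀ b ∈ B, ∀ tl : List (Bool × A), (∀ p ∈ tl, p.2 ∈ B) →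
    IsBalanced ((false, b) :: tl) →
    E (word T ((false, b) :: tl)) =
      ∑ i ∈ Finset.range tl.length,
        if (tl.getD i (true, 1)).1 = true ∧ IsBalanced ((false, b) :: tl.take (i + 1)) then
          E (star T * (b * E (word T (tl.take i))) * T) * (tl.getD i (true, 1)).2 *
            E (word T (tl.drop (i + 1)))
        else 0

end Preamble

theorem aux_comm_norm {C : Type*} [CommCStarAlgebra C] (b : C) (c : ℝ) (hc : 0 ≤ c)
    (h : ∀ χ : C →⋆ₐ[ℂ] ℂ, ‖χ b‖ ≤ c) : ‖b‖ ≤ c := by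
  have h1 : ‖gelfandStarTransform C b‖ = ‖b‖ := by
    have := (gelfandTransform_isometry C).norm_map_of_map_zero (map_zero _) b
    exact this
  rw [← h1, ContinuousMap.norm_le _ hc]
  intro x
  exact h (StarAlgHomClass.toStarAlgHom x)

theorem aux_comm_spec {C : Type*} [CommCStarAlgebra C] (b : C) (z : ℂ) (hz : z ∈ spectrum ℂ b) :
    ∃ χ : C →⋆ₐ[ℂ] ℂ, χ b = z := by
  obtain ⟨x, hx⟩ := WeakDual.CharacterSpace.mem_spectrum_iff_exists.1 hz
  exact ⟨(StarAlgHomClass.toStarAlgHom x), hx⟩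

/-- Commutative closed star subalgebra as a commutative C*-algebra. -/
@[reducible] noncomputable def auxComm {A : Type*} [CStarAlgebra A]
    (B : StarSubalgebra ℂ A) (hBclosed : IsClosed (B : Set A))
    (hBcomm : ∀ x ∈ B, ∀ y ∈ B, x * y = y * x) : CommCStarAlgebra B :=
  { StarSubalgebra.cstarAlgebra B (h_closed := hBclosed) with
    mul_comm := fun x y => Subtype.ext (hBcomm x x.2 y y.2) }

section main
set_option linter.unusedSectionVars false
variable {A : Type*} [CStarAlgebra A] [PartialOrder A] [StarOrderedRing A]
    {B : StarSubalgebra ℂ A}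

theorem aux_norm (hBclosed : IsClosed (B : Set A))
    (hBcomm : ∀ x ∈ B, ∀ y ∈ B, x * y = y * x) (b : B) (c : ℝ) (hc : 0 ≤ c)
    (h : ∀ χ : B →⋆ₐ[ℂ] ℂ, ‖χ b‖ ≤ c) : ‖(b : A)‖ ≤ c := by
  let _ := auxComm B hBclosed hBcomm
  exact aux_comm_norm b c hc h

theorem aux_spec (hBclosed : IsClosed (B : Set A))
    (hBcomm : ∀ x ∈ B, ∀ y ∈ B, x * y = y * x) (b : B) (z : ℂ) (hz : z ∈ spectrum ℂ (b : A)) :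
    ∃ χ : B →⋆ₐ[ℂ] ℂ, χ b = z := by
  have := hBclosed
  rw [← StarSubalgebra.spectrum_eq] at hz
  let _ := auxComm B hBclosed hBcomm
  exact aux_comm_spec b z hz

theorem aux_mem_spec (hBclosed : IsClosed (B : Set A)) (b : B) (χ : B →⋆ₐ[ℂ] ℂ) :
    χ b ∈ spectrum ℂ (b : A) := by
  have := hBclosed
  rw [← StarSubalgebra.spectrum_eq]
  exact AlgHom.apply_mem_spectrum χ b

theorem aux_char_le (hBclosed : IsClosed (B : Set A)) (b : B) (χ : B →⋆ₐ[ℂ] ℂ) :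
    ‖χ b‖ ≤ ‖(b : A)‖ := by
  have h := aux_mem_spec hBclosed b χ
  rcases subsingleton_or_nontrivial A with hA | hA
  · rw [spectrum.of_subsingleton] at h
    exact h.elim
  exact spectrum.norm_le_norm_of_mem (aux_mem_spec hBclosed b χ)

theorem aux_pos (hBclosed : IsClosed (B : Set A)) (b : B) (hb : 0 ≤ (b : A)) (χ : B →⋆ₐ[ℂ] ℂ) :
    0 ≤ χ b := spectrum_nonneg_of_nonneg hb (aux_mem_spec hBclosed b χ)

theorem aux_pos' (hBclosed : IsClosed (B : Set A))
    (hBcomm : ∀ x ∈ B, ∀ y ∈ B, x * y = y * x) (b : B)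
    (h : ∀ χ : B →⋆ₐ[ℂ] ℂ, 0 ≤ χ b) : 0 ≤ (b : A) := by
  have hsa : IsSelfAdjoint (b : A) := by
    have := aux_norm hBclosed hBcomm (b - star b) 0 le_rfl (by
      intro χ
      have := (IsSelfAdjoint.of_nonneg (h χ)).star_eq
      rw [map_sub, map_star, this]; simp)
    have h2 : (b : A) - star (b : A) = 0 := by
      simpa using this
    exact (sub_eq_zero.1 h2).symm
  rw [StarOrderedRing.nonneg_iff_spectrum_nonneg (R := ℝ) (b : A) hsa]
  intro t ht
  obtain ⟨χ, hχ⟩ := aux_spec hBclosed hBcomm b (t : ℂ) (spectrum.algebraMap_mem ℂ ht)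
  have := h χ
  rw [hχ] at this
  exact_mod_cast this

theorem aux_star (E : A →ₗ[ℂ] A) (hE : ∀ x : A, 0 ≤ x → 0 ≤ E x) (x : A) :
    E (star x) = star (E x) := by
  obtain ⟨y, hy, -, hx⟩ := CStarAlgebra.exists_sum_four_nonneg x
  rw [hx]
  simp only [star_sum, map_sum, map_smul, star_smul]
  refine Finset.sum_congr rfl fun i _ => ?_
  rw [(IsSelfAdjoint.of_nonneg (hy i)).star_eq, (IsSelfAdjoint.of_nonneg (hE _ (hy i))).star_eq]

/-- limit step -/
theorem aux_limit (E : A →ₗ[ℂ] A) (hE : ∀ x : A, 0 ≤ x → 0 ≤ E x)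
    (hf : ∀ x : A, E (star x * x) = 0 → x = 0) (a : A) (ha : 0 ≤ a) (R : ℝ) (hR : 0 ≤ R)
    (h : ∀ k : ℕ, ‖E (a ^ k)‖ ≤ R ^ k) : ‖a‖ ≤ R := by
  rcases subsingleton_or_nontrivial A with hA | hA
  · rw [Subsingleton.elim a 0, norm_zero]
    exact hR
  refine le_of_forall_gt_imp_ge_of_dense fun s hs => ?_
  have hs0 : 0 < s := hR.trans_lt hs
  set c : A := cfc (fun t : ℝ => max (t - s) 0) a with hc
  have hasa : IsSelfAdjoint a := .of_nonneg ha
  have hcsa : star c = c := (cfc_predicate _ a : IsSelfAdjoint c).star_eq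
  have hc2 : star c * c = cfc (fun t : ℝ => max (t - s) 0 ^ 2) a := by
    rw [hcsa, ← sq, hc]
    exact (cfc_pow (fun t : ℝ => max (t - s) 0) 2 a (by fun_prop) hasa).symm
  have key : ∀ k : ℕ, s ^ k * ‖E (star c * c)‖ ≤ ‖a‖ ^ 2 * R ^ k := by
    intro k
    have h1 : s ^ k • (star c * c) ≤ ‖a‖ ^ 2 • a ^ k := by
      rw [hc2, ← cfc_smul (s ^ k) (fun t : ℝ => max (t - s) 0 ^ 2) a (by fun_prop),
        ← cfc_pow_id (R := ℝ) a k hasa,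
        ← cfc_smul (‖a‖ ^ 2) (fun t : ℝ => t ^ k) a (by fun_prop)]
      refine cfc_mono ?_ (by fun_prop) (by fun_prop)
      intro t ht
      have ht0 : 0 ≤ t := spectrum_nonneg_of_nonneg ha ht
      have ht1 : t ≤ ‖a‖ := (le_abs_self t).trans (spectrum.norm_le_norm_of_mem ht)
      simp only [smul_eq_mul]
      rcases le_total t s with hts | hts
      · rw [max_eq_right (by linarith)]; simp; positivity
      · rw [max_eq_left (by linarith), mul_comm]
        gcongr
        linarith
    have h0 : 0 ≤ s ^ k • (star c * c) := smul_nonneg (by positivity) (star_mul_self_nonneg c)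
    have h2 : ‖E (s ^ k • (star c * c))‖ ≤ ‖E (‖a‖ ^ 2 • a ^ k)‖ := by
      apply CStarAlgebra.norm_le_norm_of_nonneg_of_le (hE _ h0)
      rw [← sub_nonneg, ← map_sub]
      exact hE _ (sub_nonneg.2 h1)
    rw [← Complex.coe_smul, ← Complex.coe_smul, map_smul, map_smul, norm_smul, norm_smul] at h2
    simp only [Complex.norm_real, Real.norm_eq_abs] at h2
    rw [abs_of_nonneg (by positivity), abs_of_nonneg (by positivity)] at h2
    exact h2.trans (by gcongr; exact h k)
  have hz : ‖E (star c * c)‖ ≤ 0 := by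
    have hlim : Tendsto (fun k : ℕ => ‖a‖ ^ 2 * (R / s) ^ k) atTop (nhds (‖a‖ ^ 2 * 0)) :=
      (tendsto_pow_atTop_nhds_zero_of_lt_one (by positivity) ((div_lt_one hs0).2 hs)).const_mul _
    rw [mul_zero] at hlim
    refine ge_of_tendsto' hlim fun k => ?_
    rw [div_pow, ← mul_div_assoc, le_div_iff₀ (by positivity), mul_comm]
    exact key k
  have hc0 : c = 0 := hf _ (norm_le_zero_iff.1 hz)
  have h3 : cfc (fun t : ℝ => max (t - s) 0) a = cfc (fun _ : ℝ => (0:ℝ)) a := by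
    rw [← hc, hc0]; simp
  have h4 := eqOn_of_cfc_eq_cfc h3 (by fun_prop) (by fun_prop) hasa (CStarAlgebra.norm_mem_spectrum_of_nonneg ha)
  simp at h4
  exact h4

/-- `x` is dominated by `M y` pointwise on the spectrum of the commutative algebra `B`. -/
def Dom (B : StarSubalgebra ℂ A) (x y : A) (M : ℝ) : Prop :=
  ∃ (hx : x ∈ B) (hy : y ∈ B), ∀ χ : B →⋆ₐ[ℂ] ℂ,
    ∃ r : ℝ, 0 ≤ r ∧ χ ⟨y, hy⟩ = r ∧ ‖χ ⟨x, hx⟩‖ ≤ M * r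

theorem dom_zero (M : ℝ) : Dom B 0 0 M :=
  ⟨zero_mem _, zero_mem _, fun χ => ⟨0, le_rfl, by
    have : (⟨0, zero_mem _⟩ : B) = 0 := rfl
    rw [this]; simp, by
    have : (⟨0, zero_mem _⟩ : B) = 0 := rfl
    rw [this]; simp⟩⟩

theorem dom_one : Dom B 1 1 1 :=
  ⟨one_mem _, one_mem _, fun χ => ⟨1, zero_le_one, by
    have : (⟨1, one_mem _⟩ : B) = 1 := rfl
    rw [this]; simp, by
    have : (⟨1, one_mem _⟩ : B) = 1 := rfl
    rw [this]; simp⟩⟩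

theorem dom_self (hBclosed : IsClosed (B : Set A)) (b : A) (hb : b ∈ B) : Dom B b 1 ‖b‖ :=
  ⟨hb, one_mem _, fun χ => ⟨1, zero_le_one, by
    have : (⟨1, one_mem _⟩ : B) = 1 := rfl
    rw [this]; simp, by
    rw [mul_one]; exact aux_char_le hBclosed ⟨b, hb⟩ χ⟩⟩

theorem dom_add {x₁ y₁ x₂ y₂ : A} {M : ℝ} (h₁ : Dom B x₁ y₁ M) (h₂ : Dom B x₂ y₂ M) :
    Dom B (x₁ + x₂) (y₁ + y₂) M := by
  obtain ⟨hx₁, hy₁, h₁⟩ := h₁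
  obtain ⟨hx₂, hy₂, h₂⟩ := h₂
  refine ⟨add_mem hx₁ hx₂, add_mem hy₁ hy₂, fun χ => ?_⟩
  obtain ⟨r₁, hr₁, e₁, n₁⟩ := h₁ χ
  obtain ⟨r₂, hr₂, e₂, n₂⟩ := h₂ χ
  have hx : (⟨x₁ + x₂, add_mem hx₁ hx₂⟩ : B) = ⟨x₁, hx₁⟩ + ⟨x₂, hx₂⟩ := rfl
  have hy : (⟨y₁ + y₂, add_mem hy₁ hy₂⟩ : B) = ⟨y₁, hy₁⟩ + ⟨y₂, hy₂⟩ := rfl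
  refine ⟨r₁ + r₂, by positivity, ?_, ?_⟩
  · rw [hy, map_add, e₁, e₂]; push_cast; rfl
  · rw [hx, map_add, mul_add]
    exact (norm_add_le _ _).trans (add_le_add n₁ n₂)

theorem dom_mul {x₁ y₁ x₂ y₂ : A} {M₁ M₂ : ℝ} (h₁ : Dom B x₁ y₁ M₁) (h₂ : Dom B x₂ y₂ M₂) :
    Dom B (x₁ * x₂) (y₁ * y₂) (M₁ * M₂) := by
  obtain ⟨hx₁, hy₁, h₁⟩ := h₁
  obtain ⟨hx₂, hy₂, h₂⟩ := h₂
  refine ⟨mul_mem hx₁ hx₂, mul_mem hy₁ hy₂, fun χ => ?_⟩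
  obtain ⟨r₁, hr₁, e₁, n₁⟩ := h₁ χ
  obtain ⟨r₂, hr₂, e₂, n₂⟩ := h₂ χ
  have hx : (⟨x₁ * x₂, mul_mem hx₁ hx₂⟩ : B) = ⟨x₁, hx₁⟩ * ⟨x₂, hx₂⟩ := rfl
  have hy : (⟨y₁ * y₂, mul_mem hy₁ hy₂⟩ : B) = ⟨y₁, hy₁⟩ * ⟨y₂, hy₂⟩ := rfl
  refine ⟨r₁ * r₂, by positivity, ?_, ?_⟩
  · rw [hy, map_mul, e₁, e₂]; push_cast; rfl
  · rw [hx, map_mul, norm_mul, mul_mul_mul_comm]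
    exact mul_le_mul n₁ n₂ (norm_nonneg _) ((norm_nonneg _).trans n₁)

theorem dom_sum {ι : Type*} (s : Finset ι) (f g : ι → A) (M : ℝ)
    (h : ∀ i ∈ s, Dom B (f i) (g i) M) : Dom B (∑ i ∈ s, f i) (∑ i ∈ s, g i) M := by
  classical
  induction s using Finset.induction_on with
  | empty => simpa using dom_zero M
  | insert a s has ih =>
    rw [Finset.sum_insert has, Finset.sum_insert has]
    exact dom_add (h _ (Finset.mem_insert_self _ _))
      (ih fun i hi => h i (Finset.mem_insert_of_mem hi))

theorem dom_norm (hBclosed : IsClosed (B : Set A))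
    (hBcomm : ∀ x ∈ B, ∀ y ∈ B, x * y = y * x) {x y : A} {M : ℝ} (hM : 0 ≤ M)
    (h : Dom B x y M) : ‖x‖ ≤ M * ‖y‖ := by
  obtain ⟨hx, hy, h⟩ := h
  refine aux_norm hBclosed hBcomm ⟨x, hx⟩ _ (by positivity) fun χ => ?_
  obtain ⟨r, hr, e, n⟩ := h χ
  refine n.trans ?_
  have := aux_char_le hBclosed ⟨y, hy⟩ χ
  rw [e, Complex.norm_real, Real.norm_of_nonneg hr] at this
  exact mul_le_mul_of_nonneg_left this hM

theorem aux_rot (z : ℂ) (c : ℝ) (h : ∀ w : ℂ, ‖w‖ = 1 → (w * z).re ≤ c) : ‖z‖ ≤ c := by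
  by_cases hz : z = 0
  · have h1 := h 1 (by simp)
    subst hz
    simpa using h1
  · have hz' : ‖z‖ ≠ 0 := norm_ne_zero_iff.2 hz
    have h1 := h (star z / ‖z‖) (by simp [hz'])
    have h2 : star z / (‖z‖ : ℂ) * z = (‖z‖ : ℂ) := by
      rw [div_mul_eq_mul_div, div_eq_iff (by exact_mod_cast hz'), Complex.star_def,
        mul_comm, Complex.mul_conj, Complex.normSq_eq_norm_sq]
      push_cast; ring
    rw [h2, Complex.ofReal_re] at h1
    exact h1

theorem dom_map (hBclosed : IsClosed (B : Set A))
    (hBcomm : ∀ x ∈ B, ∀ y ∈ B, x * y = y * x) (φ : A →ₗ[ℂ] A) (hφ : ∀ x, φ x ∈ B)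
    (hpos : ∀ x : A, 0 ≤ x → 0 ≤ φ x) {x y : A} {M : ℝ} (h : Dom B x y M) :
    Dom B (φ x) (φ y) M := by
  obtain ⟨hx, hy, h⟩ := h
  refine ⟨hφ x, hφ y, fun χ => ?_⟩
  have hy0 : 0 ≤ y := by
    refine aux_pos' hBclosed hBcomm ⟨y, hy⟩ fun χ => ?_
    obtain ⟨r, hr, e, n⟩ := h χ
    rw [e]; exact_mod_cast hr
  have hφy := aux_pos hBclosed ⟨φ y, hφ y⟩ (hpos y hy0) χ
  rw [Complex.nonneg_iff] at hφy
  have hre : χ ⟨φ y, hφ y⟩ = ((χ ⟨φ y, hφ y⟩).re : ℂ) := by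
    apply Complex.ext
    · simp
    · simp [← hφy.2]
  refine ⟨_, hφy.1, hre, ?_⟩
  apply aux_rot
  intro w hw
  let b : B := ((2 * M : ℝ) : ℂ) • ⟨y, hy⟩ - (w • ⟨x, hx⟩ + star (w • ⟨x, hx⟩))
  have hb : (0 : A) ≤ b := by
    refine aux_pos' hBclosed hBcomm b fun χ => ?_
    obtain ⟨r, hr, e, n⟩ := h χ
    have : χ b = ((2 * (M * r - (w * χ ⟨x, hx⟩).re) : ℝ) : ℂ) := by
      simp only [b, map_sub, map_add, map_smul, map_star, e, smul_eq_mul, star_mul']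
      apply Complex.ext <;> simp <;> ring
    rw [this]
    have h1 := Complex.re_le_norm (w * χ ⟨x, hx⟩)
    rw [norm_mul, hw, one_mul] at h1
    have : 0 ≤ 2 * (M * r - (w * χ ⟨x, hx⟩).re) := by linarith
    exact_mod_cast this
  let b' : B := ((2 * M : ℝ) : ℂ) • ⟨φ y, hφ y⟩ - (w • ⟨φ x, hφ x⟩ + star (w • ⟨φ x, hφ x⟩))
  have hbb : φ b = b' := by
    have e1 : (b : A) = ((2 * M : ℝ) : ℂ) • y - (w • x + star (w • x)) := rfl
    have e2 : (b' : A) = ((2 * M : ℝ) : ℂ) • φ y - (w • φ x + star (w • φ x)) := rfl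
    rw [e1, e2, map_sub, map_add, aux_star φ hpos, map_smul, map_smul]
  have hb' : (0 : A) ≤ b' := hbb ▸ hpos _ hb
  have h2 := aux_pos hBclosed b' hb' χ
  have : χ b' = ((2 * (M * (χ ⟨φ y, hφ y⟩).re - (w * χ ⟨φ x, hφ x⟩).re) : ℝ) : ℂ) := by
    simp only [b', map_sub, map_add, map_smul, map_star, smul_eq_mul, star_mul']
    rw [hre]
    apply Complex.ext <;> simp <;> ring
  rw [this] at h2
  have h3 : 0 ≤ 2 * (M * (χ ⟨φ y, hφ y⟩).re - (w * χ ⟨φ x, hφ x⟩).re) := by exact_mod_cast h2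
  linarith

/-- Replace all coefficients by `1`. -/
def ones (l : List (Bool × A)) : List (Bool × A) := l.map (fun p => (p.1, (1 : A)))

/-- Product of the norms of the coefficients. -/
noncomputable def nprod (l : List (Bool × A)) : ℝ := (l.map (fun p => ‖p.2‖)).prod

theorem nprod_nonneg (l : List (Bool × A)) : 0 ≤ nprod l :=
  List.prod_nonneg (by
    intro a ha
    obtain ⟨p, -, rfl⟩ := List.mem_map.1 ha
    exact norm_nonneg _)

theorem ones_mem (l : List (Bool × A)) : ∀ p ∈ ones l, p.2 ∈ B := by
  intro p hp
  simp only [ones, List.mem_map] at hp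
  obtain ⟨q, -, rfl⟩ := hp
  exact one_mem _

theorem ones_balanced (l : List (Bool × A)) : IsBalanced (ones l) ↔ IsBalanced l := by
  simp [IsBalanced, ones, List.countP_map, Function.comp_def]

theorem ones_getD (l : List (Bool × A)) (i : ℕ) :
    (ones l).getD i (true, 1) = ((l.getD i (true, 1)).1, 1) := by
  simp only [ones, List.getD_eq_getElem?_getD, List.getElem?_map]
  cases l[i]? <;> simp

theorem nprod_split (l : List (Bool × A)) (i : ℕ) (hi : i < l.length) :
    nprod l = nprod (l.take i) * ‖(l.getD i (true, 1)).2‖ * nprod (l.drop (i + 1)) := by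
  rw [List.getD_eq_getElem _ _ hi]
  conv_lhs => rw [← List.take_append_drop i l, List.drop_eq_getElem_cons hi]
  unfold nprod
  rw [List.map_append, List.prod_append, List.map_cons, List.prod_cons, mul_assoc]

/-- The map `c ↦ E (S c S')`. -/
noncomputable def phi (E : A →ₗ[ℂ] A) (S S' : A) : A →ₗ[ℂ] A :=
  E ∘ₗ LinearMap.mulLeftRight ℂ (S, S')

theorem phi_apply (E : A →ₗ[ℂ] A) (S S' x : A) : phi E S S' x = E (S * x * S') := rfl

theorem dom_word (hBclosed : IsClosed (B : Set A))
    (hBcomm : ∀ x ∈ B, ∀ y ∈ B, x * y = y * x)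
    (E : A →ₗ[ℂ] A) (hE : IsCondExp B E)
    (T : A) (hT : IsBCircular B E T) (n : ℕ) :
    ∀ l : List (Bool × A), l.length ≤ n → (∀ p ∈ l, p.2 ∈ B) →
      Dom B (E (word T l)) (E (word T (ones l))) (nprod l) := by
  induction n with
  | zero =>
    intro l hl _
    have : l = [] := by simpa using hl
    subst this
    have h1 : E (1 : A) = 1 := hE.fixes 1 (one_mem _)
    simpa [word, ones, nprod, h1] using dom_one
  | succ n ih =>
    intro l hl hlB
    by_cases hbal : IsBalanced l
    swap
    · rw [hT.expect_unbalanced l hlB hbal, hT.expect_unbalanced (ones l) (ones_mem l)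
        (by rwa [ones_balanced])]
      exact dom_zero _
    match l, hl, hlB, hbal with
    | [], _, _, _ =>
      have h1 : E (1 : A) = 1 := hE.fixes 1 (one_mem _)
      simpa [word, ones, nprod, h1] using dom_one
    | (ε, b) :: tl, hl, hlB, hbal =>
      have hb : b ∈ B := hlB (ε, b) (by simp)
      have htl : ∀ p ∈ tl, p.2 ∈ B := fun p hp => hlB p (by simp [hp])
      have hlen : tl.length ≤ n := by simpa using hl
      have hones : ones ((ε, b) :: tl) = (ε, 1) :: ones tl := rfl
      have hbal1 : IsBalanced ((ε, (1 : A)) :: ones tl) := by rwa [← hones, ones_balanced]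
      have hterm : ∀ S S' : A, (S' = star S) → ∀ i ∈ Finset.range tl.length,
          Dom B (E (S * (b * E (word T (tl.take i))) * S') * (tl.getD i (true, 1)).2 *
            E (word T (tl.drop (i + 1))))
            (E (S * (1 * E (word T ((ones tl).take i))) * S') * ((ones tl).getD i (true, 1)).2 *
            E (word T ((ones tl).drop (i + 1)))) (nprod ((ε, b) :: tl)) := by
        intro S S' hS i hi
        have hi : i < tl.length := Finset.mem_range.1 hi
        have e1 : (ones tl).take i = ones (tl.take i) := by simp [ones]
        have e2 : (ones tl).drop (i + 1) = ones (tl.drop (i + 1)) := by simp [ones]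
        have e3 : nprod ((ε, b) :: tl) = (‖b‖ * nprod (tl.take i)) * ‖(tl.getD i (true, 1)).2‖
            * nprod (tl.drop (i + 1)) := by
          have : nprod ((ε, b) :: tl) = ‖b‖ * nprod tl := by simp [nprod]
          rw [this, nprod_split tl i hi]; ring
        rw [e1, e2, e3, ones_getD]
        have hd1 := ih (tl.take i) (by simp; omega) (fun p hp => htl p (List.mem_of_mem_take hp))
        have hd2 := ih (tl.drop (i + 1)) (by simp; omega)
          (fun p hp => htl p (List.mem_of_mem_drop hp))
        refine dom_mul (dom_mul ?_ ?_) hd2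
        · refine dom_map hBclosed hBcomm (phi E S S') (fun x => hE.mem_range _) ?_
            (dom_mul (dom_self hBclosed b hb) hd1)
          intro x hx
          rw [phi_apply, hS]
          exact hE.positive _ (star_right_conjugate_nonneg hx S)
        · refine dom_self hBclosed _ (htl _ ?_)
          rw [List.getD_eq_getElem _ _ hi]
          exact List.getElem_mem hi
      have hcond : ∀ i, IsBalanced ((ε, (1 : A)) :: (ones tl).take (i + 1)) ↔
          IsBalanced ((ε, b) :: tl.take (i + 1)) := by
        intro i
        have : (ε, (1 : A)) :: (ones tl).take (i + 1) = ones ((ε, b) :: tl.take (i + 1)) := by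
          simp [ones]
        rw [this, ones_balanced]
      have hlen1 : (ones tl).length = tl.length := by simp [ones]
      rw [hones]
      cases ε with
      | true =>
        rw [hT.expect_cons_one b hb tl htl hbal,
          hT.expect_cons_one 1 (one_mem _) (ones tl) (ones_mem tl) hbal1, hlen1]
        refine dom_sum _ _ _ _ fun i hi => ?_
        simp only [hcond, ones_getD]
        split_ifs
        · simpa only [ones_getD] using hterm T (star T) rfl i hi
        · exact dom_zero _
      | false =>
        rw [hT.expect_cons_star b hb tl htl hbal,
          hT.expect_cons_star 1 (one_mem _) (ones tl) (ones_mem tl) hbal1, hlen1]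
        refine dom_sum _ _ _ _ fun i hi => ?_
        simp only [hcond, ones_getD]
        split_ifs
        · simpa only [ones_getD] using hterm (star T) T (star_star T).symm i hi
        · exact dom_zero _

theorem word_cons (T : A) (p : Bool × A) (l : List (Bool × A)) :
    word T (p :: l) = cond p.1 T (star T) * p.2 * word T l := by simp [word]

theorem word_append (T : A) (l m : List (Bool × A)) :
    word T (l ++ m) = word T l * word T m := by simp [word]

theorem ones_cons (p : Bool × A) (l : List (Bool × A)) :
    ones (p :: l) = (p.1, 1) :: ones l := rfl

theorem ones_append (l m : List (Bool × A)) : ones (l ++ m) = ones l ++ ones m := by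
  simp [ones]

theorem nprod_cons (p : Bool × A) (l : List (Bool × A)) :
    nprod (p :: l) = ‖p.2‖ * nprod l := by simp [nprod]

theorem nprod_append (l m : List (Bool × A)) : nprod (l ++ m) = nprod l * nprod m := by
  simp [nprod]

theorem word_nil (T : A) : word T [] = 1 := rfl

theorem cond_star (T : A) (ε : Bool) : cond (!ε) T (star T) = star (cond ε T (star T)) := by
  cases ε <;> simp

theorem exists_sq (T : A) (l : List (Bool × A)) (hl : l ≠ []) (hlB : ∀ p ∈ l, p.2 ∈ B) :
    ∀ d ∈ B, ∃ m : List (Bool × A), (∀ p ∈ m, p.2 ∈ B) ∧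
      word T m = word T l * star (word T l) * d ∧
      word T (ones m) = word T (ones l) * star (word T (ones l)) ∧
      nprod m = nprod l ^ 2 * ‖d‖ := by
  induction l with
  | nil => exact absurd rfl hl
  | cons p tl ih =>
    intro d hd
    have hp : p.2 ∈ B := hlB p (by simp)
    by_cases htl : tl = []
    · subst htl
      refine ⟨[(p.1, p.2 * star p.2), (!p.1, d)], ?_, ?_, ?_, ?_⟩
      · intro q hq
        simp only [List.mem_cons, List.not_mem_nil, or_false] at hq
        rcases hq with rfl | rfl
        · exact mul_mem hp (star_mem hp)
        · exact hd
      · simp only [word_cons, word_nil, cond_star, star_mul, star_one, mul_one, one_mul, mul_assoc]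
      · have : ones ([] : List (Bool × A)) = [] := rfl
        simp only [ones_cons, this, word_cons, word_nil, cond_star, star_mul, star_one, mul_one,
          one_mul]
      · simp only [nprod, List.map_cons, List.map_nil, List.prod_cons, List.prod_nil,
          CStarRing.norm_self_mul_star]
        ring
    · obtain ⟨m, hm, h1, h2, h3⟩ := ih htl (fun q hq => hlB q (by simp [hq])) (star p.2)
        (star_mem hp)
      refine ⟨p :: (m ++ [(!p.1, d)]), ?_, ?_, ?_, ?_⟩
      · intro q hq
        simp only [List.mem_cons, List.mem_append, List.not_mem_nil, or_false] at hq
        rcases hq with rfl | hq | rfl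
        · exact hp
        · exact hm q hq
        · exact hd
      · simp only [word_cons, word_append, h1, word_nil, cond_star, star_mul, mul_one, mul_assoc]
      · have : ones ([] : List (Bool × A)) = [] := rfl
        simp only [ones_cons, ones_append, this, word_cons, word_append, h2, word_nil, cond_star,
          star_mul, star_one, mul_one, one_mul, mul_assoc]
      · have : nprod ([] : List (Bool × A)) = 1 := rfl
        rw [nprod_cons, nprod_append, nprod_cons, nprod_cons, h3, norm_star, this]; ring

theorem exists_pow (T : A) (l : List (Bool × A)) (hlB : ∀ p ∈ l, p.2 ∈ B) (k : ℕ) :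
    ∃ m : List (Bool × A), (∀ p ∈ m, p.2 ∈ B) ∧ word T m = word T l ^ k ∧
      word T (ones m) = word T (ones l) ^ k ∧ nprod m = nprod l ^ k := by
  induction k with
  | zero => exact ⟨[], by simp, by simp [word], by simp [word, ones], by simp [nprod]⟩
  | succ k ih =>
    obtain ⟨m, hm, h1, h2, h3⟩ := ih
    refine ⟨m ++ l, ?_, ?_, ?_, ?_⟩
    · intro p hp
      rcases List.mem_append.1 hp with hp | hp
      · exact hm p hp
      · exact hlB p hp
    · rw [word_append, h1, pow_succ]
    · rw [ones_append, word_append, h2, pow_succ]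
    · rw [nprod_append, h3, pow_succ]

end main

/-- For a `B`-valued circular element `T` over a commutative unital C*-subalgebra `B`,
with respect to a faithful conditional expectation `E`,
`‖T^{ε₁} b₁ ⋯ T^{εₙ} bₙ‖ ≤ (∏ⱼ ‖bⱼ‖) ‖T^{ε₁} ⋯ T^{εₙ}‖`. -/
theorem norm_word_le
    {A : Type*} [CStarAlgebra A] [PartialOrder A] [StarOrderedRing A]
    (B : StarSubalgebra ℂ A) (hBclosed : IsClosed (B : Set A))
    (hBcomm : ∀ x ∈ B, ∀ y ∈ B, x * y = y * x)
    (E : A →ₗ[ℂ] A) (hE : IsCondExp B E)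
    (hfaithful : ∀ x : A, E (star x * x) = 0 → x = 0)
    (T : A) (hT : IsBCircular B E T)
    (l : List (Bool × A)) (hl : l ≠ []) (hlB : ∀ p ∈ l, p.2 ∈ B) :
    ‖word T l‖ ≤
      (l.map (fun p => ‖p.2‖)).prod * ‖word T (l.map (fun p => (p.1, (1 : A))))‖ := by

  change ‖word T l‖ ≤ nprod l * ‖word T (ones l)‖
  rcases subsingleton_or_nontrivial A with hA | hA
  · rw [Subsingleton.elim (word T l) 0, norm_zero]
    exact mul_nonneg (nprod_nonneg l) (norm_nonneg _)
  obtain ⟨m, hm, h1, h2, h3⟩ := exists_sq T l hl hlB 1 (one_mem B)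
  rw [mul_one] at h1
  rw [norm_one, mul_one] at h3
  have key : ‖word T m‖ ≤ nprod m * ‖word T (ones m)‖ := by
    refine aux_limit E hE.positive hfaithful _ ?_ _
      (mul_nonneg (nprod_nonneg m) (norm_nonneg _)) fun k => ?_
    · rw [h1]; exact mul_star_self_nonneg _
    · obtain ⟨L, hL, e1, e2, e3⟩ := exists_pow T m hm k
      have hd := dom_norm hBclosed hBcomm (nprod_nonneg L)
        (dom_word hBclosed hBcomm E hE T hT L.length L le_rfl hL)
      rw [e1, e2, e3] at hd
      rw [mul_pow]
      refine hd.trans (mul_le_mul_of_nonneg_left ?_ (pow_nonneg (nprod_nonneg m) k))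
      exact (hE.contractive _).trans (norm_pow_le _ _)
  rw [h1, h2, h3, CStarRing.norm_self_mul_star, CStarRing.norm_self_mul_star] at key
  refine abs_le_of_sq_le_sq' ?_ (mul_nonneg (nprod_nonneg l) (norm_nonneg _)) |>.2
  calc ‖word T l‖ ^ 2 = ‖word T l‖ * ‖word T l‖ := sq _
    _ ≤ _ := key
    _ = _ := by ring
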